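/- For every p with 1 < p < ∞, the von Neumann–Jordan constant of the Schatten class S_p(H) equals max{2^{2/p − 1}, 2^{1 − 2/p}}. -/

import Mathlib

open scoped InnerProductSpace ENNReal Topology
open Filter

/-- An Orlicz function (N-function): convex, nondecreasing and continuous on `[0, ∞)`,
vanishing at `0`, positive on `(0, ∞)` and tending to `∞` at `∞`. -/
structure OrliczFunction : Type where
  toFun : ℝ → ℝ
  convexOn : ConvexOn ℝ (Set.Ici (0 : ℝ)) toFun
  monotoneOn : MonotoneOn toFun (Set.Ici (0 : ℝ))
  continuousOn : ContinuousOn toFun (Set.Ici (0 : ℝ))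
  map_zero : toFun 0 = 0
  pos : ∀ x : ℝ, 0 < x → 0 < toFun x
  tendsto_atTop : Filter.Tendsto toFun Filter.atTop Filter.atTop

/-- `ψ` is the complementary N-function of `φ`: `ψ(y) = sup {x·y − φ(x) : x ≥ 0}`. -/
def OrliczFunction.IsComplementary (φ ψ : OrliczFunction) : Prop :=
  ∀ y : ℝ, 0 ≤ y → ψ.toFun y = sSup {v : ℝ | ∃ x : ℝ, 0 ≤ x ∧ v = x * y - φ.toFun x}

/-- `g` is the (two-sided) inverse of `f` on `[0, ∞)`, taking nonnegative values. -/
def IsOrliczInverse (g f : ℝ → ℝ) : Prop :=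
  (∀ u : ℝ, 0 ≤ u → 0 ≤ g u) ∧ (∀ u : ℝ, 0 ≤ u → f (g u) = u) ∧
    ∀ u : ℝ, 0 ≤ u → g (f u) = u

variable {H : Type} [NormedAddCommGroup H] [InnerProductSpace ℂ H] [CompleteSpace H]

/-- The `n`-th singular value of an operator `T` (indexed from `n = 0`), described as the
`n`-th approximation number: the distance from `T` to the operators of rank `≤ n`.  For a
compact operator on a Hilbert space this is exactly the `(n+1)`-st eigenvalue of
`|T| = (T*T)^(1/2)` in decreasing order. -/
noncomputable def sValue (T : H →L[ℂ] H) (n : ℕ) : ℝ :=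
  sInf {c : ℝ | ∃ F : H →L[ℂ] H,
    Module.rank ℂ (LinearMap.range F.toLinearMap) ≤ (n : Cardinal) ∧ c = ‖T - F‖}

/-- `tr(φ(|T|)) = Σ_n φ(s_n(T))`. -/
noncomputable def orliczSum (φ : OrliczFunction) (T : H →L[ℂ] H) : ℝ :=
  ∑' n : ℕ, φ.toFun (sValue T n)

/-- Membership in the noncommutative Orlicz sequence space `S_φ(H)`:
`T` is compact and `Σ_n φ(λ s_n(T)) < ∞` for some `λ > 0`. -/
def MemS (φ : OrliczFunction) (T : H →L[ℂ] H) : Prop :=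
  IsCompactOperator (⇑T) ∧
    ∃ l : ℝ, 0 < l ∧ Summable fun n : ℕ => φ.toFun (l * sValue T n)

/-- The Luxemburg norm `‖T‖_(φ) = inf {λ > 0 : Σ_n φ(s_n(T)/λ) ≤ 1}`. -/
noncomputable def luxNorm (φ : OrliczFunction) (T : H →L[ℂ] H) : ℝ :=
  sInf {l : ℝ | 0 < l ∧ (Summable fun n : ℕ => φ.toFun (sValue T n / l)) ∧
    ∑' n : ℕ, φ.toFun (sValue T n / l) ≤ 1}

/-- The Orlicz norm `‖T‖_φ = sup {tr |TB| : tr(ψ(B)) ≤ 1}`, expressed through the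
complementary function `ψ` of `φ` (here `tr|TB| = Σ_n s_n(TB)`). -/
noncomputable def orlNormVia (ψ : OrliczFunction) (T : H →L[ℂ] H) : ℝ :=
  sSup {c : ℝ | ∃ B : H →L[ℂ] H, IsCompactOperator (⇑B) ∧
    (Summable fun n : ℕ => ψ.toFun (sValue B n)) ∧
    (∑' n : ℕ, ψ.toFun (sValue B n)) ≤ 1 ∧ c = ∑' n : ℕ, sValue (T ∘L B) n}

/-- The norm `‖T‖_((φ),p) = (‖T₁‖_(φ₁)^p + ‖T₂‖_(φ₂)^p)^(1/p)` on 2-tuples. -/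
noncomputable def luxNorm2 (φ₁ φ₂ : OrliczFunction) (p : ℝ) (T₁ T₂ : H →L[ℂ] H) : ℝ :=
  (luxNorm φ₁ T₁ ^ p + luxNorm φ₂ T₂ ^ p) ^ (1 / p)

/-- The Orlicz-type norm `‖T‖_(φ,p) = (‖T₁‖_φ₁^p + ‖T₂‖_φ₂^p)^(1/p)` on 2-tuples,
where the Orlicz norms are computed via the complementary functions `ψ₁, ψ₂`. -/
noncomputable def orlNorm2 (ψ₁ ψ₂ : OrliczFunction) (p : ℝ) (T₁ T₂ : H →L[ℂ] H) : ℝ :=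
  (orlNormVia ψ₁ T₁ ^ p + orlNormVia ψ₂ T₂ ^ p) ^ (1 / p)

/-- 2-tuple Luxemburg norm for an exponent `r ∈ [1, ∞]`. -/
noncomputable def luxNorm2E (φ₁ φ₂ : OrliczFunction) (r : ℝ≥0∞) (T₁ T₂ : H →L[ℂ] H) : ℝ :=
  if r = ⊤ then max (luxNorm φ₁ T₁) (luxNorm φ₂ T₂)
  else (luxNorm φ₁ T₁ ^ r.toReal + luxNorm φ₂ T₂ ^ r.toReal) ^ (1 / r.toReal)

/-- The trace of an operator, computed along a Hilbert basis. -/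
noncomputable def traceAlong {ι : Type} (b : HilbertBasis ι ℂ H) (T : H →L[ℂ] H) : ℂ :=
  ∑' i : ι, ⟪b i, T (b i)⟫_ℂ

/-- The Schatten `p`-norm `‖T‖_p = (Σ_n s_n(T)^p)^(1/p)`. -/
noncomputable def schattenNorm (p : ℝ) (T : H →L[ℂ] H) : ℝ :=
  (∑' n : ℕ, sValue T n ^ p) ^ (1 / p)

/-- Membership in the Schatten class `S_p(H)`. -/
def MemSp (p : ℝ) (T : H →L[ℂ] H) : Prop :=
  IsCompactOperator (⇑T) ∧ Summable fun n : ℕ => sValue T n ^ p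

/-- The nonsquare constant `J` of the noncommutative Orlicz space `S_φ(H)`
(with the Luxemburg norm). -/
noncomputable def JOrlicz (φ : OrliczFunction) : ℝ :=
  sSup {c : ℝ | ∃ T B : H →L[ℂ] H, MemS φ T ∧ MemS φ B ∧
    luxNorm φ T = 1 ∧ luxNorm φ B = 1 ∧
    c = min (luxNorm φ (T + B)) (luxNorm φ (T - B))}

/-- The von Neumann–Jordan constant of `S_φ(H)` (with the Luxemburg norm): the smallest
`c > 0` such that `1/c ≤ (‖x+y‖² + ‖x−y‖²)/(2(‖x‖² + ‖y‖²)) ≤ c` for all `x, y` in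
`S_φ(H)` not both zero. -/
noncomputable def cNJOrlicz (φ : OrliczFunction) : ℝ :=
  sInf {c : ℝ | 0 < c ∧ ∀ T B : H →L[ℂ] H, MemS φ T → MemS φ B → ¬(T = 0 ∧ B = 0) →
    1 / c ≤ (luxNorm φ (T + B) ^ 2 + luxNorm φ (T - B) ^ 2) /
        (2 * (luxNorm φ T ^ 2 + luxNorm φ B ^ 2)) ∧
      (luxNorm φ (T + B) ^ 2 + luxNorm φ (T - B) ^ 2) /
        (2 * (luxNorm φ T ^ 2 + luxNorm φ B ^ 2)) ≤ c}

/-- The von Neumann–Jordan constant of the Schatten class `S_p(H)`. -/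
noncomputable def cNJSchatten (p : ℝ) : ℝ :=
  sInf {c : ℝ | 0 < c ∧ ∀ T B : H →L[ℂ] H, MemSp p T → MemSp p B → ¬(T = 0 ∧ B = 0) →
    1 / c ≤ (schattenNorm p (T + B) ^ 2 + schattenNorm p (T - B) ^ 2) /
        (2 * (schattenNorm p T ^ 2 + schattenNorm p B ^ 2)) ∧
      (schattenNorm p (T + B) ^ 2 + schattenNorm p (T - B) ^ 2) /
        (2 * (schattenNorm p T ^ 2 + schattenNorm p B ^ 2)) ≤ c}

/-!
Put `r = p / 2`, so that `‖T‖_p ^ 2 = (Tr |T| ^ p) ^ (1 / r)` with `|T| ^ p = (T⋆ T) ^ r`. The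
column operator `x ↦ (T x, B x)` has squared modulus `T⋆ T + B⋆ B`, which is half of
`(T + B)⋆ (T + B) + (T - B)⋆ (T - B)`. If `W⋆ W = T⋆ T + B⋆ B` and `c` is an orthonormal basis of
right singular vectors of `W`, then the squared singular values of `T` are averages of those of `W`
with doubly substochastic weights, and the same holds for `B`, with total column sums `1`. Jensen's
inequality then gives `Tr (T⋆ T) ^ r + Tr (B⋆ B) ^ r ≤ Tr (W⋆ W) ^ r` for `1 ≤ r`, and the reverse
for `r ≤ 1`. Combined with Minkowski's inequality (reversed for `r ≤ 1`) in the basis `c`, this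
bounds `‖T + B‖_p ^ 2 + ‖T - B‖_p ^ 2` by the stated multiple of `‖T‖_p ^ 2 + ‖B‖_p ^ 2`. Replacing
`T, B` by `T + B, T - B` yields the lower bound with the same constant. Two orthogonal rank-one
projections `T, B` have `‖T ± B‖_p = 2 ^ (1 / p)`, so the constant is attained.
-/

section WeightedSums

variable {ι κ : Type*} {r : ℝ}

theorem tsum_mul_le_rpow_inv_tsum_mul_rpow (hr : 1 ≤ r) {w : ι → ℝ≥0∞} (hw : ∑' i, w i ≤ 1)
    (f : ι → ℝ≥0∞) : ∑' i, w i * f i ≤ (∑' i, w i * f i ^ r) ^ r⁻¹ := by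
  rw [ENNReal.tsum_eq_iSup_sum]
  refine iSup_le fun s => ?_
  calc ∑ i ∈ s, w i * f i
      ≤ (∑ i ∈ s, w i) ^ (1 - r⁻¹) * (∑ i ∈ s, w i * f i ^ r) ^ r⁻¹ :=
        ENNReal.inner_le_weight_mul_Lp_of_nonneg s hr w f
    _ ≤ 1 ^ (1 - r⁻¹) * (∑' i, w i * f i ^ r) ^ r⁻¹ := by
        have : r⁻¹ ≤ 1 := inv_le_one_of_one_le₀ hr
        gcongr
        · exact (ENNReal.sum_le_tsum s).trans hw
        · exact ENNReal.sum_le_tsum s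
    _ = (∑' i, w i * f i ^ r) ^ r⁻¹ := by rw [ENNReal.one_rpow, one_mul]

theorem rpow_tsum_mul_le_tsum_mul_rpow (hr : 1 ≤ r) {w : ι → ℝ≥0∞} (hw : ∑' i, w i ≤ 1)
    (f : ι → ℝ≥0∞) : (∑' i, w i * f i) ^ r ≤ ∑' i, w i * f i ^ r := by
  rw [← ENNReal.le_rpow_inv_iff (by positivity)]
  exact tsum_mul_le_rpow_inv_tsum_mul_rpow hr hw f

theorem tsum_mul_rpow_le_rpow_tsum_mul (hr₀ : 0 < r) (hr : r ≤ 1) {w : ι → ℝ≥0∞}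
    (hw : ∑' i, w i ≤ 1) (f : ι → ℝ≥0∞) : ∑' i, w i * f i ^ r ≤ (∑' i, w i * f i) ^ r := by
  simpa [ENNReal.rpow_rpow_inv hr₀.ne'] using
    tsum_mul_le_rpow_inv_tsum_mul_rpow ((one_le_inv₀ hr₀).2 hr) hw fun i => f i ^ r

theorem tsum_rpow_tsum_mul_le (hr : 1 ≤ r) {m : ι → κ → ℝ≥0∞} (hm : ∀ i, ∑' k, m i k ≤ 1)
    (y : κ → ℝ≥0∞) : ∑' i, (∑' k, m i k * y k) ^ r ≤ ∑' k, (∑' i, m i k) * y k ^ r :=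
  calc ∑' i, (∑' k, m i k * y k) ^ r
      ≤ ∑' i, ∑' k, m i k * y k ^ r :=
        ENNReal.tsum_le_tsum fun i => rpow_tsum_mul_le_tsum_mul_rpow hr (hm i) y
    _ = ∑' k, (∑' i, m i k) * y k ^ r := by
        simp_rw [ENNReal.tsum_comm (f := fun i k => m i k * _), ENNReal.tsum_mul_right]

theorem le_tsum_rpow_tsum_mul (hr₀ : 0 < r) (hr : r ≤ 1) {m : ι → κ → ℝ≥0∞}
    (hm : ∀ i, ∑' k, m i k ≤ 1) (y : κ → ℝ≥0∞) :
    ∑' k, (∑' i, m i k) * y k ^ r ≤ ∑' i, (∑' k, m i k * y k) ^ r :=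
  calc ∑' k, (∑' i, m i k) * y k ^ r
      = ∑' i, ∑' k, m i k * y k ^ r := by
        simp_rw [ENNReal.tsum_comm (f := fun i k => m i k * _), ENNReal.tsum_mul_right]
    _ ≤ ∑' i, (∑' k, m i k * y k) ^ r :=
        ENNReal.tsum_le_tsum fun i => tsum_mul_rpow_le_rpow_tsum_mul hr₀ hr (hm i) y

end WeightedSums

section Minkowski

variable {ι : Type*} {r : ℝ}

open MeasureTheory in
theorem rpow_inv_tsum_add_rpow_le (hr : 1 ≤ r) (f g : ι → ℝ≥0∞) :
    (∑' i, (f i + g i) ^ r) ^ r⁻¹ ≤ (∑' i, f i ^ r) ^ r⁻¹ + (∑' i, g i ^ r) ^ r⁻¹ := by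
  let _ : MeasurableSpace ι := ⊤
  simpa [lintegral_count] using ENNReal.lintegral_Lp_add_le (μ := Measure.count) (f := f) (g := g)
    measurable_from_top.aemeasurable measurable_from_top.aemeasurable hr

-- The triangle inequality for sums of vectors in the plane with the `ℓ^q` norm, `q = 1/r ≥ 1`.
theorem sum_rpow_inv_add_le (hr₀ : 0 < r) (hr : r ≤ 1) (f g : ι → ℝ≥0∞) (s : Finset ι) :
    ((∑ i ∈ s, f i ^ r) ^ r⁻¹ + (∑ i ∈ s, g i ^ r) ^ r⁻¹) ^ r ≤ ∑ i ∈ s, (f i + g i) ^ r := by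
  let N : ℝ≥0∞ × ℝ≥0∞ → ℝ≥0∞ := fun x => (x.1 ^ r⁻¹ + x.2 ^ r⁻¹) ^ r
  have hN : ∀ x y, N (x + y) ≤ N x + N y := fun x y => by
    simpa [N] using ENNReal.Lp_add_le (s := Finset.univ) (f := ![x.1, x.2]) (g := ![y.1, y.2])
      ((one_le_inv₀ hr₀).2 hr)
  have h := Finset.le_sum_of_subadditive N (by simp [N, hr₀]) hN s fun i => (f i ^ r, g i ^ r)
  simpa [N, Prod.fst_sum, Prod.snd_sum, ENNReal.rpow_rpow_inv hr₀.ne'] using h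

theorem le_rpow_inv_tsum_add_rpow (hr₀ : 0 < r) (hr : r ≤ 1) (f g : ι → ℝ≥0∞) :
    (∑' i, f i ^ r) ^ r⁻¹ + (∑' i, g i ^ r) ^ r⁻¹ ≤ (∑' i, (f i + g i) ^ r) ^ r⁻¹ := by
  have hlim (f : ι → ℝ≥0∞) : Tendsto (fun s : Finset ι => (∑ i ∈ s, f i ^ r) ^ r⁻¹) atTop
      (𝓝 ((∑' i, f i ^ r) ^ r⁻¹)) :=
    (ENNReal.continuous_rpow_const.tendsto _).comp ENNReal.summable.hasSum
  refine le_of_tendsto' ((hlim f).add (hlim g)) fun s => ?_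
  rw [ENNReal.le_rpow_inv_iff hr₀]
  exact (sum_rpow_inv_add_le hr₀ hr f g s).trans (ENNReal.sum_le_tsum s)

theorem rpow_inv_tsum_mul_rpow (hr : 0 < r) (C : ℝ≥0∞) (f : ι → ℝ≥0∞) :
    (∑' i, (C * f i) ^ r) ^ r⁻¹ = C * (∑' i, f i ^ r) ^ r⁻¹ := by
  simp_rw [ENNReal.mul_rpow_of_nonneg _ _ hr.le]
  rw [ENNReal.tsum_mul_left, ENNReal.mul_rpow_of_nonneg _ _ (by positivity),
    ENNReal.rpow_rpow_inv hr.ne']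

end Minkowski

section SingularBasis

variable {𝕜 E F G : Type*} [RCLike 𝕜] [NormedAddCommGroup E] [InnerProductSpace 𝕜 E]
  [NormedAddCommGroup F] [InnerProductSpace 𝕜 F] [NormedAddCommGroup G] [InnerProductSpace 𝕜 G]
  {ι κ : Type*} {a : HilbertBasis ι 𝕜 E} {c : HilbertBasis κ 𝕜 E} {T : E →L[𝕜] F} {W : E →L[𝕜] G}

/-- `a` is a Hilbert basis of right singular vectors of `T`: the images `T (a i)` are pairwise
orthogonal. The corresponding singular values are `‖T (a i)‖`, in no particular order. -/
def IsSingularBasis (a : HilbertBasis ι 𝕜 E) (T : E →L[𝕜] F) : Prop :=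
  Pairwise fun i j => ⟪T (a i), T (a j)⟫_𝕜 = 0

theorem isSingularBasis_id (a : HilbertBasis ι 𝕜 E) :
    IsSingularBasis a (ContinuousLinearMap.id 𝕜 E) :=
  fun _ _ hij => a.orthonormal.2 hij

namespace IsSingularBasis

theorem of_map_eq_smul (ha : IsSingularBasis a T) {S : E →L[𝕜] F} {z : ι → 𝕜}
    (h : ∀ i, S (a i) = z i • T (a i)) : IsSingularBasis a S := fun i j hij => by
  simp [h, inner_smul_left, inner_smul_right, ha hij]

theorem inner_map (ha : IsSingularBasis a T) (i : ι) (x : E) :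
    ⟪T (a i), T x⟫_𝕜 = ⟪a i, x⟫_𝕜 * (‖T (a i)‖ ^ 2 : ℝ) := by
  have hsum := (a.hasSum_repr x).mapL (innerSL 𝕜 (T (a i)) ∘L T)
  have hzero : ∀ j ≠ i, (innerSL 𝕜 (T (a i)) ∘L T) (a.repr x j • a j) = 0 := fun j hj => by
    simp [ha hj.symm]
  simpa [a.repr_apply_apply] using hsum.unique (hasSum_single i hzero)

theorem hasSum_norm_sq (ha : IsSingularBasis a T) (x : E) :
    HasSum (fun i => ‖⟪a i, x⟫_𝕜‖ ^ 2 * ‖T (a i)‖ ^ 2) (‖T x‖ ^ 2) := by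
  have hsum := (a.hasSum_repr x).mapL (innerSL 𝕜 (T x) ∘L T)
  have hterm (i : ι) : (innerSL 𝕜 (T x) ∘L T) (a.repr x i • a i) =
      ((‖⟪a i, x⟫_𝕜‖ ^ 2 * ‖T (a i)‖ ^ 2 : ℝ) : 𝕜) := by
    simp only [map_smul, ContinuousLinearMap.comp_apply, innerSL_apply_apply, smul_eq_mul,
      a.repr_apply_apply]
    rw [← inner_conj_symm (T x), ha.inner_map, map_mul, RCLike.conj_ofReal, ← mul_assoc,
      RCLike.mul_conj]
    norm_cast
  have hlim : (innerSL 𝕜 (T x) ∘L T) x = ((‖T x‖ ^ 2 : ℝ) : 𝕜) := by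
    simp [inner_self_eq_norm_sq_to_K]
  simp_rw [hterm, hlim] at hsum
  exact (RCLike.hasSum_ofReal 𝕜).1 hsum

theorem tsum_enorm_inner_sq_mul (ha : IsSingularBasis a T) (x : E) :
    ∑' i, ‖⟪a i, x⟫_𝕜‖ₑ ^ 2 * ‖T (a i)‖ₑ ^ 2 = ‖T x‖ₑ ^ 2 := by
  have h := ha.hasSum_norm_sq x
  simpa [← ofReal_norm, ENNReal.ofReal_mul, ENNReal.ofReal_pow, h.tsum_eq] using
    (ENNReal.ofReal_tsum_of_nonneg (fun i => by positivity) h.summable).symm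

theorem mul_norm_le_norm_map (ha : IsSingularBasis a T) {t : ℝ} (ht : 0 ≤ t) {x : E}
    (h : ∀ i, ⟪a i, x⟫_𝕜 ≠ 0 → t ≤ ‖T (a i)‖) : t * ‖x‖ ≤ ‖T x‖ := by
  have hsum := ((isSingularBasis_id a).hasSum_norm_sq x).mul_left (t ^ 2)
  refine le_of_sq_le_sq ?_ (norm_nonneg _)
  rw [mul_pow]
  refine hasSum_le (fun i => ?_) hsum (ha.hasSum_norm_sq x)
  rcases eq_or_ne ⟪a i, x⟫_𝕜 0 with hi | hi
  · simp [hi]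
  · rw [mul_comm, ContinuousLinearMap.id_apply, a.orthonormal.1, one_pow, mul_one]
    gcongr
    exact h i hi

theorem opNorm_le (ha : IsSingularBasis a T) {t : ℝ} (ht : 0 ≤ t) (h : ∀ i, ‖T (a i)‖ ≤ t) :
    ‖T‖ ≤ t := by
  refine T.opNorm_le_bound ht fun x => le_of_sq_le_sq ?_ (by positivity)
  have hsum := ((isSingularBasis_id a).hasSum_norm_sq x).mul_left (t ^ 2)
  rw [mul_pow]
  refine hasSum_le (fun i => ?_) (ha.hasSum_norm_sq x) hsum
  rw [mul_comm, ContinuousLinearMap.id_apply, a.orthonormal.1, one_pow, mul_one]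
  gcongr
  exact h i

theorem norm_map_sum_sq (ha : IsSingularBasis a T) (s : Finset ι) (z : ι → 𝕜) :
    ‖T (∑ i ∈ s, z i • a i)‖ ^ 2 = ∑ i ∈ s, ‖z i‖ ^ 2 * ‖T (a i)‖ ^ 2 := by
  classical
  have hcoeff (i : ι) : ⟪a i, ∑ j ∈ s, z j • a j⟫_𝕜 = if i ∈ s then z i else 0 := by
    simp [inner_sum, inner_smul_right, orthonormal_iff_ite.1 a.orthonormal]
  rw [(ha.hasSum_norm_sq _).unique
    (hasSum_sum_of_ne_finset_zero (s := s) fun i hi => by simp [hcoeff, hi])]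
  exact Finset.sum_congr rfl fun i hi => by simp [hcoeff, hi]

end IsSingularBasis

theorem tsum_enorm_inner_sq (a : HilbertBasis ι 𝕜 E) (x : E) :
    ∑' i, ‖⟪a i, x⟫_𝕜‖ₑ ^ 2 = ‖x‖ₑ ^ 2 := by
  simpa [a.orthonormal.1, ← ofReal_norm] using (isSingularBasis_id a).tsum_enorm_inner_sq_mul x

theorem tsum_enorm_inner_sq_basis (a : HilbertBasis ι 𝕜 E) (c : HilbertBasis κ 𝕜 E) (k : κ) :
    ∑' i, ‖⟪a i, c k⟫_𝕜‖ₑ ^ 2 = 1 := by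
  rw [tsum_enorm_inner_sq, ← ofReal_norm, c.orthonormal.1, ENNReal.ofReal_one, one_pow]

theorem tsum_enorm_basis_inner_sq (a : HilbertBasis ι 𝕜 E) (c : HilbertBasis κ 𝕜 E) (k : κ) :
    ∑' i, ‖⟪c k, a i⟫_𝕜‖ₑ ^ 2 = 1 := by
  have hsymm (i : ι) : ‖⟪c k, a i⟫_𝕜‖ₑ = ‖⟪a i, c k⟫_𝕜‖ₑ := by
    rw [← ofReal_norm, norm_inner_symm, ofReal_norm]
  simp_rw [hsymm, tsum_enorm_inner_sq_basis]

namespace IsSingularBasis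

theorem tsum_rpow_basis_le (ha : IsSingularBasis a T) (c : HilbertBasis κ 𝕜 E) {r : ℝ}
    (hr : 1 ≤ r) : ∑' k, (‖T (c k)‖ₑ ^ 2) ^ r ≤ ∑' i, (‖T (a i)‖ₑ ^ 2) ^ r := by
  have h := tsum_rpow_tsum_mul_le hr (m := fun k i => ‖⟪a i, c k⟫_𝕜‖ₑ ^ 2)
    (fun k => (tsum_enorm_inner_sq_basis a c k).le)
    fun i => ‖T (a i)‖ₑ ^ 2
  simpa only [ha.tsum_enorm_inner_sq_mul, tsum_enorm_basis_inner_sq, one_mul] using h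

theorem le_tsum_rpow_basis (ha : IsSingularBasis a T) (c : HilbertBasis κ 𝕜 E) {r : ℝ}
    (hr₀ : 0 < r) (hr : r ≤ 1) :
    ∑' i, (‖T (a i)‖ₑ ^ 2) ^ r ≤ ∑' k, (‖T (c k)‖ₑ ^ 2) ^ r := by
  have h := le_tsum_rpow_tsum_mul hr₀ hr (m := fun k i => ‖⟪a i, c k⟫_𝕜‖ₑ ^ 2)
    (fun k => (tsum_enorm_inner_sq_basis a c k).le)
    fun i => ‖T (a i)‖ₑ ^ 2
  simpa only [ha.tsum_enorm_inner_sq_mul, tsum_enorm_basis_inner_sq, one_mul] using h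

end IsSingularBasis

section Coupling

/-- The weight by which `‖W (c k)‖ ^ 2` enters the average that gives `‖T (a i)‖ ^ 2`: the squared
inner product of the unit vector along `T (a i)` with the image of the unit vector along `W (c k)`
under the contraction `W x ↦ T x`. -/
noncomputable def couplingWeight (a : HilbertBasis ι 𝕜 E) (T : E →L[𝕜] F)
    (c : HilbertBasis κ 𝕜 E) (W : E →L[𝕜] G) (i : ι) (k : κ) : ℝ≥0∞ :=
  ‖⟪a i, c k⟫_𝕜‖ₑ ^ 2 * ‖T (a i)‖ₑ ^ 2 / ‖W (c k)‖ₑ ^ 2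

namespace IsSingularBasis

theorem enorm_inner_sq_mul_eq_zero (ha : IsSingularBasis a T) {x : E} (hx : T x = 0) (i : ι) :
    ‖⟪a i, x⟫_𝕜‖ₑ ^ 2 * ‖T (a i)‖ₑ ^ 2 = 0 :=
  ENNReal.tsum_eq_zero.1 ((ha.tsum_enorm_inner_sq_mul x).trans (by simp [hx])) i

theorem sum_coupling_le_one (ha : IsSingularBasis a T) (hc : IsSingularBasis c W)
    (hTW : ∀ x, ‖T x‖ ≤ ‖W x‖) (i : ι) (s : Finset κ) :
    (∑ k ∈ s, ‖⟪a i, c k⟫_𝕜‖ ^ 2 / ‖W (c k)‖ ^ 2) * ‖T (a i)‖ ^ 2 ≤ 1 := by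
  set S : ℝ := ∑ k ∈ s, ‖⟪a i, c k⟫_𝕜‖ ^ 2 / ‖W (c k)‖ ^ 2
  have hS : 0 ≤ S := Finset.sum_nonneg fun _ _ => by positivity
  let y : E := ∑ k ∈ s, (⟪c k, a i⟫_𝕜 / (‖W (c k)‖ ^ 2 : ℝ)) • c k
  have hWy : ‖W y‖ ^ 2 = S := by
    rw [hc.norm_map_sum_sq]
    refine Finset.sum_congr rfl fun k _ => ?_
    rcases eq_or_ne ‖W (c k)‖ 0 with h0 | h0
    · simp [h0]
    · simp only [norm_div, norm_inner_symm (c k), RCLike.norm_ofReal, abs_pow, abs_norm]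
      field_simp
  have hinner : ⟪a i, y⟫_𝕜 = (S : 𝕜) := by
    simp only [y, S, inner_sum, inner_smul_right, RCLike.ofReal_sum]
    refine Finset.sum_congr rfl fun k _ => ?_
    rw [div_mul_eq_mul_div, ← inner_conj_symm, RCLike.conj_mul]
    push_cast
    rfl
  have hbound : S ^ 2 * ‖T (a i)‖ ^ 2 ≤ S :=
    calc S ^ 2 * ‖T (a i)‖ ^ 2 = ‖⟪a i, y⟫_𝕜‖ ^ 2 * ‖T (a i)‖ ^ 2 := by simp [hinner]
      _ ≤ ‖T y‖ ^ 2 := le_hasSum (ha.hasSum_norm_sq y) i fun _ _ => by positivity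
      _ ≤ ‖W y‖ ^ 2 := by gcongr; exact hTW y
      _ = S := hWy
  rcases hS.eq_or_lt with h0 | h0
  · simp [← h0]
  · exact le_of_mul_le_mul_left (by linarith) h0

theorem tsum_couplingWeight_le_one (ha : IsSingularBasis a T) (hc : IsSingularBasis c W)
    (hTW : ∀ x, ‖T x‖ ≤ ‖W x‖) (i : ι) : ∑' k, couplingWeight a T c W i k ≤ 1 := by
  have hweight (k : κ) : couplingWeight a T c W i k =
      ENNReal.ofReal (‖⟪a i, c k⟫_𝕜‖ ^ 2 / ‖W (c k)‖ ^ 2 * ‖T (a i)‖ ^ 2) := by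
    rcases eq_or_ne (W (c k)) 0 with h0 | h0
    · have hT0 : T (c k) = 0 := norm_le_zero_iff.1 (by simpa [h0] using hTW (c k))
      simp [couplingWeight, ha.enorm_inner_sq_mul_eq_zero hT0, h0]
    · have hpos : 0 < ‖W (c k)‖ ^ 2 := by positivity
      simp only [couplingWeight, ← ofReal_norm, ← ENNReal.ofReal_pow (norm_nonneg _)]
      rw [← ENNReal.ofReal_mul (by positivity), ← ENNReal.ofReal_div_of_pos hpos,
        div_mul_eq_mul_div]
  simp_rw [hweight]
  rw [ENNReal.tsum_eq_iSup_sum]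
  refine iSup_le fun s => ?_
  rw [← ENNReal.ofReal_sum_of_nonneg fun _ _ => by positivity, ENNReal.ofReal_le_one,
    ← Finset.sum_mul]
  exact ha.sum_coupling_le_one hc hTW i s

theorem tsum_couplingWeight_mul (ha : IsSingularBasis a T) (hTW : ∀ x, ‖T x‖ ≤ ‖W x‖) (i : ι) :
    ∑' k, couplingWeight a T c W i k * ‖W (c k)‖ₑ ^ 2 = ‖T (a i)‖ₑ ^ 2 := by
  have hterm (k : κ) : couplingWeight a T c W i k * ‖W (c k)‖ₑ ^ 2 =
      ‖⟪a i, c k⟫_𝕜‖ₑ ^ 2 * ‖T (a i)‖ₑ ^ 2 := by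
    refine ENNReal.div_mul_cancel' (fun h0 => ?_) (by simp)
    have hW0 : W (c k) = 0 := by simpa using h0
    exact ha.enorm_inner_sq_mul_eq_zero (norm_le_zero_iff.1 (by simpa [hW0] using hTW (c k))) i
  simp_rw [hterm]
  rw [ENNReal.tsum_mul_right, tsum_enorm_basis_inner_sq, one_mul]

theorem tsum_couplingWeight_left (ha : IsSingularBasis a T) (k : κ) :
    ∑' i, couplingWeight a T c W i k = ‖T (c k)‖ₑ ^ 2 / ‖W (c k)‖ₑ ^ 2 := by
  simp_rw [couplingWeight, div_eq_mul_inv]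
  rw [ENNReal.tsum_mul_right, ha.tsum_enorm_inner_sq_mul]

theorem tsum_rpow_le_of_norm_le (ha : IsSingularBasis a T) (hc : IsSingularBasis c W)
    (hTW : ∀ x, ‖T x‖ ≤ ‖W x‖) {r : ℝ} (hr : 1 ≤ r) :
    ∑' i, (‖T (a i)‖ₑ ^ 2) ^ r ≤
      ∑' k, ‖T (c k)‖ₑ ^ 2 / ‖W (c k)‖ₑ ^ 2 * (‖W (c k)‖ₑ ^ 2) ^ r := by
  have h := tsum_rpow_tsum_mul_le hr (ha.tsum_couplingWeight_le_one hc hTW) fun k => ‖W (c k)‖ₑ ^ 2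
  simp_rw [ha.tsum_couplingWeight_left] at h
  exact h.trans_eq' (by simp_rw [ha.tsum_couplingWeight_mul hTW])

theorem le_tsum_rpow_of_norm_le (ha : IsSingularBasis a T) (hc : IsSingularBasis c W)
    (hTW : ∀ x, ‖T x‖ ≤ ‖W x‖) {r : ℝ} (hr₀ : 0 < r) (hr : r ≤ 1) :
    ∑' k, ‖T (c k)‖ₑ ^ 2 / ‖W (c k)‖ₑ ^ 2 * (‖W (c k)‖ₑ ^ 2) ^ r ≤
      ∑' i, (‖T (a i)‖ₑ ^ 2) ^ r := by
  have h := le_tsum_rpow_tsum_mul hr₀ hr (ha.tsum_couplingWeight_le_one hc hTW)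
    fun k => ‖W (c k)‖ₑ ^ 2
  simp_rw [ha.tsum_couplingWeight_left] at h
  exact h.trans_eq (by simp_rw [ha.tsum_couplingWeight_mul hTW])

end IsSingularBasis

end Coupling

section NormSqSum

variable {G' : Type*} [NormedAddCommGroup G'] [InnerProductSpace 𝕜 G'] {ι' : Type*}
  {b : HilbertBasis ι' 𝕜 E} {B : E →L[𝕜] G'} {r : ℝ}

theorem norm_le_of_norm_sq_eq_add (hW : ∀ x, ‖W x‖ ^ 2 = ‖T x‖ ^ 2 + ‖B x‖ ^ 2) (x : E) :
    ‖T x‖ ≤ ‖W x‖ :=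
  le_of_sq_le_sq (by rw [hW]; exact le_add_of_nonneg_right (sq_nonneg _)) (norm_nonneg _)

theorem enorm_sq_eq_add_of_norm_sq_eq_add (hW : ∀ x, ‖W x‖ ^ 2 = ‖T x‖ ^ 2 + ‖B x‖ ^ 2) (x : E) :
    ‖W x‖ₑ ^ 2 = ‖T x‖ₑ ^ 2 + ‖B x‖ₑ ^ 2 := by
  simp only [← ofReal_norm, ← ENNReal.ofReal_pow (norm_nonneg _), hW]
  exact ENNReal.ofReal_add (by positivity) (by positivity)

theorem div_mul_rpow_add_div_mul_rpow (hr : 0 < r)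
    (hW : ∀ x, ‖W x‖ ^ 2 = ‖T x‖ ^ 2 + ‖B x‖ ^ 2) (x : E) :
    ‖T x‖ₑ ^ 2 / ‖W x‖ₑ ^ 2 * (‖W x‖ₑ ^ 2) ^ r + ‖B x‖ₑ ^ 2 / ‖W x‖ₑ ^ 2 * (‖W x‖ₑ ^ 2) ^ r =
      (‖W x‖ₑ ^ 2) ^ r := by
  rcases eq_or_ne (W x) 0 with h0 | h0
  · simp [h0, hr]
  · rw [← add_mul, ← ENNReal.add_div, ← enorm_sq_eq_add_of_norm_sq_eq_add hW,
      ENNReal.div_self (by simpa using h0) (by simp), one_mul]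

namespace IsSingularBasis

theorem tsum_rpow_add_tsum_rpow_le (ha : IsSingularBasis a T) (hb : IsSingularBasis b B)
    (hc : IsSingularBasis c W) (hW : ∀ x, ‖W x‖ ^ 2 = ‖T x‖ ^ 2 + ‖B x‖ ^ 2) (hr : 1 ≤ r) :
    ∑' i, (‖T (a i)‖ₑ ^ 2) ^ r + ∑' j, (‖B (b j)‖ₑ ^ 2) ^ r ≤ ∑' k, (‖W (c k)‖ₑ ^ 2) ^ r := by
  have h := add_le_add (ha.tsum_rpow_le_of_norm_le hc (norm_le_of_norm_sq_eq_add hW) hr)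
    (hb.tsum_rpow_le_of_norm_le hc
      (norm_le_of_norm_sq_eq_add fun x => (hW x).trans (add_comm _ _)) hr)
  rwa [← ENNReal.tsum_add,
    tsum_congr fun k => div_mul_rpow_add_div_mul_rpow (one_pos.trans_le hr) hW (c k)] at h

theorem tsum_rpow_le_tsum_rpow_add (ha : IsSingularBasis a T) (hb : IsSingularBasis b B)
    (hc : IsSingularBasis c W) (hW : ∀ x, ‖W x‖ ^ 2 = ‖T x‖ ^ 2 + ‖B x‖ ^ 2) (hr₀ : 0 < r)
    (hr : r ≤ 1) :
    ∑' k, (‖W (c k)‖ₑ ^ 2) ^ r ≤ ∑' i, (‖T (a i)‖ₑ ^ 2) ^ r + ∑' j, (‖B (b j)‖ₑ ^ 2) ^ r := by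
  have h := add_le_add (ha.le_tsum_rpow_of_norm_le hc (norm_le_of_norm_sq_eq_add hW) hr₀ hr)
    (hb.le_tsum_rpow_of_norm_le hc
      (norm_le_of_norm_sq_eq_add fun x => (hW x).trans (add_comm _ _)) hr₀ hr)
  rwa [← ENNReal.tsum_add,
    tsum_congr fun k => div_mul_rpow_add_div_mul_rpow hr₀ hW (c k)] at h

end IsSingularBasis

end NormSqSum

end SingularBasis

section EigenvectorBasis

variable {𝕜 E F : Type*} [RCLike 𝕜] [NormedAddCommGroup E] [InnerProductSpace 𝕜 E]
  [NormedAddCommGroup F] [InnerProductSpace 𝕜 F]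

theorem orthogonal_span_sigma_le {ι : Type*} {κ : ι → Type*} {V : ι → Submodule 𝕜 E}
    [∀ i, (V i).HasOrthogonalProjection] (b : ∀ i, HilbertBasis (κ i) 𝕜 (V i)) :
    (Submodule.span 𝕜 (Set.range fun k : Σ i, κ i => (b k.1 k.2 : E)))ᗮ ≤ (⨆ i, V i)ᗮ := by
  intro x hx
  rw [← Submodule.iInf_orthogonal, Submodule.mem_iInf]
  intro i
  rw [← Submodule.orthogonalProjectionOnto_eq_zero_iff, ← map_eq_zero_iff _ (b i).repr.injective]
  ext k
  exact ((b i).repr_apply_apply _ k).trans <|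
    ((V i).inner_orthogonalProjectionOnto_eq_of_mem_left (b i k) x).trans <|
      hx _ (Submodule.subset_span ⟨⟨i, k⟩, rfl⟩)

variable [CompleteSpace E]

theorem exists_hilbertBasis_mem_of_orthogonalFamily {ι : Type*} {V : ι → Submodule 𝕜 E}
    [∀ i, CompleteSpace (V i)] (hV : OrthogonalFamily 𝕜 (fun i => V i) fun i => (V i).subtypeₗᵢ)
    (htop : (⨆ i, V i)ᗮ = ⊥) :
    ∃ (s : Set E) (a : HilbertBasis s 𝕜 E), ∀ x, ∃ i, a x ∈ V i := by
  choose w b _ using fun i => exists_hilbertBasis 𝕜 (V i)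
  have hon := hV.orthonormal_sigma_orthonormal fun i => (b i).orthonormal
  refine ⟨_, HilbertBasis.mkOfOrthogonalEqBot hon.toSubtypeRange ?_, ?_⟩
  · rw [Subtype.range_coe]
    exact eq_bot_iff.2 ((orthogonal_span_sigma_le b).trans htop.le)
  · rintro ⟨_, k, rfl⟩
    rw [HilbertBasis.coe_mkOfOrthogonalEqBot]
    exact ⟨k.1, (b k.1 k.2).2⟩

theorem exists_hilbertBasis_eigenvectors {Z : E →L[𝕜] E} (hZ : IsCompactOperator Z)
    (hZ' : Z.IsSymmetric) :
    ∃ (s : Set E) (a : HilbertBasis s 𝕜 E), ∀ x, ∃ μ : 𝕜, Z (a x) = μ • a x := by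
  have hcomplete (μ : 𝕜) : CompleteSpace (Module.End.eigenspace Z.toLinearMap μ) :=
    (Z.isClosed_eigenspace μ).completeSpace_coe
  obtain ⟨s, a, ha⟩ := exists_hilbertBasis_mem_of_orthogonalFamily
    hZ'.orthogonalFamily_eigenspaces
    (ContinuousLinearMap.orthogonalComplement_iSup_eigenspaces_eq_bot hZ hZ')
  exact ⟨s, a, fun x => (ha x).imp fun _ => Module.End.mem_eigenspace_iff.1⟩

theorem exists_isSingularBasis [CompleteSpace F] {T : E →L[𝕜] F} (hT : IsCompactOperator T) :
    ∃ (s : Set E) (a : HilbertBasis s 𝕜 E), IsSingularBasis a T := by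
  obtain ⟨s, a, ha⟩ := exists_hilbertBasis_eigenvectors (hT.clm_comp T.adjoint)
    (Z := T.adjoint ∘L T) (ContinuousLinearMap.isPositive_adjoint_comp_self T).isSymmetric
  refine ⟨s, a, fun i j hij => ?_⟩
  obtain ⟨μ, hμ⟩ := ha i
  rw [ContinuousLinearMap.comp_apply] at hμ
  rw [← ContinuousLinearMap.adjoint_inner_left, hμ, inner_smul_left, a.orthonormal.2 hij, mul_zero]

end EigenvectorBasis

section ColumnOperator

variable {𝕜 E F G : Type*} [RCLike 𝕜] [NormedAddCommGroup E] [InnerProductSpace 𝕜 E]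
  [NormedAddCommGroup F] [InnerProductSpace 𝕜 F] [NormedAddCommGroup G] [InnerProductSpace 𝕜 G]

/-- The operator `x ↦ (T x, B x)` into the Hilbert space direct sum. It satisfies
`(columnOp T B)⋆ (columnOp T B) = T⋆ T + B⋆ B`. -/
noncomputable def columnOp (T : E →L[𝕜] F) (B : E →L[𝕜] G) : E →L[𝕜] WithLp 2 (F × G) :=
  (WithLp.prodContinuousLinearEquiv 2 𝕜 F G).symm.toContinuousLinearMap ∘L T.prod B

theorem norm_columnOp_sq (T : E →L[𝕜] F) (B : E →L[𝕜] G) (x : E) :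
    ‖columnOp T B x‖ ^ 2 = ‖T x‖ ^ 2 + ‖B x‖ ^ 2 :=
  WithLp.prod_norm_sq_eq_of_L2 _

theorem isCompactOperator_columnOp {T : E →L[𝕜] F} {B : E →L[𝕜] G} (hT : IsCompactOperator T)
    (hB : IsCompactOperator B) : IsCompactOperator (columnOp T B) := by
  obtain ⟨K, hK, hTK⟩ := hT
  obtain ⟨L, hL, hBL⟩ := hB
  have hprod : IsCompactOperator (T.prod B) := ⟨K ×ˢ L, hK.prod hL, inter_mem hTK hBL⟩
  exact hprod.clm_comp (WithLp.prodContinuousLinearEquiv 2 𝕜 F G).symm.toContinuousLinearMap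

theorem norm_sqrt_two_smul_columnOp_sq (T B : E →L[𝕜] F) (x : E) :
    ‖(((√2 : ℝ) : 𝕜) • columnOp T B) x‖ ^ 2 = ‖(T + B) x‖ ^ 2 + ‖(T - B) x‖ ^ 2 := by
  have h := parallelogram_law_with_norm 𝕜 (T x) (B x)
  rw [smul_apply, norm_smul, mul_pow, norm_columnOp_sq, RCLike.norm_ofReal, sq_abs,
    Real.sq_sqrt zero_le_two, add_apply, sub_apply]
  linarith

theorem enorm_columnOp_sq (T : E →L[𝕜] F) (B : E →L[𝕜] G) (x : E) :
    ‖columnOp T B x‖ₑ ^ 2 = ‖T x‖ₑ ^ 2 + ‖B x‖ₑ ^ 2 :=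
  enorm_sq_eq_add_of_norm_sq_eq_add (norm_columnOp_sq T B) x

theorem enorm_sqrt_two_smul_columnOp_sq (T : E →L[𝕜] F) (B : E →L[𝕜] G) (x : E) :
    ‖(((√2 : ℝ) : 𝕜) • columnOp T B) x‖ₑ ^ 2 = 2 * (‖T x‖ₑ ^ 2 + ‖B x‖ₑ ^ 2) := by
  have h : ‖((√2 : ℝ) : 𝕜)‖ₑ ^ 2 = 2 := by
    rw [← ofReal_norm, RCLike.norm_ofReal, ← ENNReal.ofReal_pow (abs_nonneg _), sq_abs,
      Real.sq_sqrt zero_le_two, ENNReal.ofReal_ofNat]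
  rw [smul_apply, enorm_smul, mul_pow, h, enorm_columnOp_sq]

end ColumnOperator

section DiagonalOperator

open InnerProductSpace

variable {𝕜 E : Type*} [RCLike 𝕜] [NormedAddCommGroup E] [InnerProductSpace 𝕜 E] {ι : Type*}

/-- The diagonal operator `e i ↦ d i • e i` for finitely many nonzero entries `d i`. -/
noncomputable def diagonalOp (e : HilbertBasis ι 𝕜 E) : (ι →₀ 𝕜) →ₗ[𝕜] E →L[𝕜] E :=
  Finsupp.linearCombination 𝕜 fun i => rankOne 𝕜 (e i) (e i)

theorem diagonalOp_apply (e : HilbertBasis ι 𝕜 E) (d : ι →₀ 𝕜) (x : E) :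
    diagonalOp e d x = ∑ i ∈ d.support, (d i * ⟪e i, x⟫_𝕜) • e i := by
  simp [diagonalOp, Finsupp.linearCombination_apply, Finsupp.sum, sum_apply, mul_smul]

theorem diagonalOp_apply_basis (e : HilbertBasis ι 𝕜 E) (d : ι →₀ 𝕜) (k : ι) :
    diagonalOp e d (e k) = d k • e k := by
  rw [diagonalOp_apply, Finset.sum_eq_single k]
  · simp [e.orthonormal.1]
  · intro i _ hik
    simp [e.orthonormal.2 hik]
  · intro hk
    simp [Finsupp.notMem_support_iff.1 hk]

theorem rank_diagonalOp_le (e : HilbertBasis ι 𝕜 E) (d : ι →₀ 𝕜) :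
    (diagonalOp e d).rank ≤ d.support.card := by
  classical
  have hle : (diagonalOp e d).range ≤ Submodule.span 𝕜 (d.support.image e : Finset E) := by
    rintro _ ⟨x, rfl⟩
    rw [ContinuousLinearMap.coe_coe, diagonalOp_apply]
    exact Submodule.sum_smul_mem _ _ fun i hi =>
      Submodule.subset_span (Finset.mem_coe.2 (Finset.mem_image_of_mem e hi))
  refine (Submodule.rank_mono hle).trans ((rank_span_finset_le _).trans ?_)
  exact_mod_cast Finset.card_image_le

theorem isCompactOperator_diagonalOp (e : HilbertBasis ι 𝕜 E) (d : ι →₀ 𝕜) :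
    IsCompactOperator (diagonalOp e d) := by
  have hrankOne (i : ι) : rankOne 𝕜 (e i) (e i) ∈ compactOperator (RingHom.id 𝕜) E E :=
    (isCompactOperator_of_locallyCompactSpace_dom (innerSL 𝕜 (e i))).clm_comp
      (ContinuousLinearMap.toSpanSingleton 𝕜 (e i))
  exact Submodule.sum_smul_mem _ _ fun i _ => hrankOne i

theorem isSingularBasis_diagonalOp (e : HilbertBasis ι 𝕜 E) (d : ι →₀ 𝕜) :
    IsSingularBasis e (diagonalOp e d) :=
  (isSingularBasis_id e).of_map_eq_smul (diagonalOp_apply_basis e d)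

end DiagonalOperator

section SingularValues

variable {E : Type} [NormedAddCommGroup E] [InnerProductSpace ℂ E] {T F : E →L[ℂ] E} {n : ℕ} {t : ℝ}

theorem sValue_le (hF : Module.rank ℂ F.toLinearMap.range ≤ n) : sValue T n ≤ ‖T - F‖ :=
  csInf_le ⟨0, by rintro _ ⟨F, -, rfl⟩; positivity⟩ ⟨F, hF, rfl⟩

theorem le_sValue
    (h : ∀ F : E →L[ℂ] E, Module.rank ℂ F.toLinearMap.range ≤ n → t ≤ ‖T - F‖) :
    t ≤ sValue T n :=
  le_csInf ⟨‖T - 0‖, 0, by simp, rfl⟩ (by rintro _ ⟨F, hF, rfl⟩; exact h F hF)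

theorem sValue_nonneg (T : E →L[ℂ] E) (n : ℕ) : 0 ≤ sValue T n :=
  le_sValue fun _ _ => norm_nonneg _

theorem sValue_zero_eq_norm (T : E →L[ℂ] E) : sValue T 0 = ‖T‖ := by
  refine le_antisymm (by simpa using sValue_le (T := T) (F := 0) (n := 0) (by simp))
    (le_sValue fun F hF => ?_)
  have hF₀ : F = 0 :=
    ContinuousLinearMap.coe_injective (LinearMap.range_eq_bot.1 (by simpa using hF))
  simp [hF₀]

theorem sValue_smul_le {z : ℂ} (hz : z ≠ 0) (T : E →L[ℂ] E) (n : ℕ) :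
    sValue (z • T) n ≤ ‖z‖ * sValue T n := by
  rw [← inv_mul_le_iff₀ (norm_pos_iff.2 hz)]
  refine le_sValue fun F hF => ?_
  have hzF : (z • F).rank ≤ n := by
    rwa [LinearMap.rank, ContinuousLinearMap.toLinearMap_smul, LinearMap.range_smul _ _ hz]
  rw [inv_mul_le_iff₀ (norm_pos_iff.2 hz), ← norm_smul, smul_sub]
  exact sValue_le hzF

theorem sValue_smul (z : ℂ) (T : E →L[ℂ] E) (n : ℕ) : sValue (z • T) n = ‖z‖ * sValue T n := by
  rcases eq_or_ne z 0 with rfl | hz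
  · simpa using (sValue_le (T := (0 : E →L[ℂ] E)) (F := 0) (n := n) (by simp)).antisymm
      (by simpa using sValue_nonneg 0 n)
  · refine (sValue_smul_le hz T n).antisymm ?_
    have h := sValue_smul_le (inv_ne_zero hz) (z • T) n
    rwa [inv_smul_smul₀ hz, norm_inv, ← div_eq_inv_mul, le_div_iff₀' (norm_pos_iff.2 hz)] at h

theorem exists_mem_ne_zero_map_eq_zero.{u, v} {K : Type v} {V W : Type u} [DivisionRing K]
    [AddCommGroup V] [Module K V] [AddCommGroup W] [Module K W] {U : Submodule K V}
    {f : V →ₗ[K] W} (h : f.rank < Module.rank K U) : ∃ x ∈ U, x ≠ 0 ∧ f x = 0 := by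
  by_contra! hf
  have hinj : Function.Injective (f.rangeRestrict ∘ₗ U.subtype) := by
    rw [injective_iff_map_eq_zero]
    rintro ⟨x, hx⟩ hfx
    by_contra hx₀
    exact hf x hx (by simpa using hx₀) (by simpa using congrArg Subtype.val hfx)
  exact h.not_ge (LinearMap.rank_le_of_injective _ hinj)

namespace IsSingularBasis

variable {ι : Type*} {a : HilbertBasis ι ℂ E} {s : Finset ι}

theorem sValue_le_of_card_le (ha : IsSingularBasis a T) (ht : 0 ≤ t) (hsn : s.card ≤ n)
    (hs : ∀ i ∉ s, ‖T (a i)‖ ≤ t) : sValue T n ≤ t := by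
  classical
  let d : ι →₀ ℂ := Finsupp.indicator s fun _ _ => 1
  let F := T ∘L diagonalOp a d
  have hcard : d.support.card ≤ n :=
    (Finset.card_le_card (Finsupp.support_indicator_subset _ _)).trans hsn
  have hrank : F.rank ≤ n :=
    (LinearMap.rank_comp_le_right (diagonalOp a d).toLinearMap T.toLinearMap).trans
      ((rank_diagonalOp_le a d).trans (by exact_mod_cast hcard))
  have hTF (i : ι) : (T - F) (a i) = (1 - d i) • T (a i) := by
    simp [F, diagonalOp_apply_basis, sub_smul]
  refine (sValue_le hrank).trans ((ha.of_map_eq_smul hTF).opNorm_le ht fun i => ?_)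
  by_cases hi : i ∈ s
  · simpa [hTF, d, hi] using ht
  · simpa [hTF, d, hi] using hs i hi

theorem le_sValue_of_lt_card (ha : IsSingularBasis a T) (ht : 0 ≤ t) (hsn : n < s.card)
    (hs : ∀ i ∈ s, t ≤ ‖T (a i)‖) : t ≤ sValue T n := by
  refine le_sValue fun F hF => ?_
  let U := Submodule.span ℂ (Set.range fun i : s => a i)
  have hU : Module.rank ℂ U = s.card := by
    have hli : LinearIndependent ℂ fun i : s => a i :=
      (a.orthonormal.comp _ Subtype.val_injective).linearIndependent
    have : FiniteDimensional ℂ U := .span_of_finite ℂ (Set.finite_range _)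
    rw [← Module.finrank_eq_rank, finrank_span_eq_card hli, Fintype.card_coe]
  obtain ⟨x, hxU, hx₀, hFx⟩ := exists_mem_ne_zero_map_eq_zero (U := U) (f := F.toLinearMap)
    (hF.trans_lt (hU ▸ by exact_mod_cast hsn))
  have hx (i : ι) (hi : ⟪a i, x⟫_ℂ ≠ 0) : i ∈ s := by
    contrapose! hi
    refine Submodule.mem_orthogonal_singleton_iff_inner_right.1 (Submodule.span_le.2 ?_ hxU)
    rintro _ ⟨j, rfl⟩
    refine Submodule.mem_orthogonal_singleton_iff_inner_right.2 (a.orthonormal.2 fun hij => ?_)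
    exact hi (hij ▸ j.2)
  refine le_of_mul_le_mul_right ?_ (norm_pos_iff.2 hx₀)
  calc t * ‖x‖ ≤ ‖T x‖ := ha.mul_norm_le_norm_map ht fun i hi => hs i (hx i hi)
    _ = ‖(T - F) x‖ := by rw [sub_apply, show F x = 0 from hFx, sub_zero]
    _ ≤ ‖T - F‖ * ‖x‖ := (T - F).le_opNorm x

theorem lt_sValue_iff (ha : IsSingularBasis a T) (ht : 0 ≤ t) (n : ℕ) :
    t < sValue T n ↔ n < {i | t < ‖T (a i)‖}.encard := by
  refine ⟨fun hlt => ?_, fun hlt => ?_⟩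
  · contrapose! hlt
    obtain ⟨s, hs⟩ := (Set.finite_of_encard_le_coe hlt).exists_finset_coe
    rw [← hs, Set.encard_coe_eq_coe_finsetCard, Nat.cast_le] at hlt
    refine ha.sValue_le_of_card_le ht hlt fun i hi => not_lt.1 fun hti => hi ?_
    exact Finset.mem_coe.1 (hs ▸ hti)
  · obtain ⟨s, hs, hcard⟩ := Set.exists_subset_encard_eq (Order.add_one_le_of_lt hlt)
    obtain ⟨s, rfl⟩ := (Set.finite_of_encard_eq_coe (k := n + 1) hcard).exists_finset_coe
    rw [Set.encard_coe_eq_coe_finsetCard] at hcard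
    replace hcard : s.card = n + 1 := by exact_mod_cast hcard
    obtain ⟨k, hk, hmin⟩ := s.exists_min_image (fun i => ‖T (a i)‖) (Finset.card_pos.1 (by lia))
    exact (hs hk).trans_le (ha.le_sValue_of_lt_card (norm_nonneg _) (by lia) hmin)

end IsSingularBasis

theorem encard_setOf_coe_lt (N : ℕ∞) : {n : ℕ | (n : ℕ∞) < N}.encard = N := by
  induction N using ENat.recTopCoe with
  | top => simp
  | coe N =>
    have : {n : ℕ | (n : ℕ∞) < N} = Finset.range N := by ext; simp
    rw [this, Set.encard_coe_eq_coe_finsetCard, Finset.card_range]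

open MeasureTheory in
theorem tsum_ofReal_rpow_eq_of_encard_eq {ι κ : Type*} {f : ι → ℝ} {g : κ → ℝ} (hf : ∀ i, 0 ≤ f i)
    (hg : ∀ k, 0 ≤ g k) (h : ∀ t, 0 < t → {i | t < f i}.encard = {k | t < g k}.encard)
    {p : ℝ} (hp : 0 < p) :
    ∑' i, ENNReal.ofReal (f i) ^ p = ∑' k, ENNReal.ofReal (g k) ^ p := by
  let _ : MeasurableSpace ι := ⊤
  let _ : MeasurableSpace κ := ⊤
  simp_rw [ENNReal.ofReal_rpow_of_nonneg (hf _) hp.le, ENNReal.ofReal_rpow_of_nonneg (hg _) hp.le,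
    ← lintegral_count]
  rw [lintegral_rpow_eq_lintegral_meas_lt_mul _ (Eventually.of_forall hf)
      measurable_from_top.aemeasurable hp,
    lintegral_rpow_eq_lintegral_meas_lt_mul _ (Eventually.of_forall hg)
      measurable_from_top.aemeasurable hp]
  congr 1
  refine setLIntegral_congr_fun measurableSet_Ioi fun t ht => ?_
  simp only [Measure.count_apply MeasurableSpace.measurableSet_top, h t ht]

/-- The trace `Tr (T⋆T)^r = ∑ s_n(T)^(2r)` in `[0, ∞]`; working with `r = p / 2` makes
`traceRpow r T ^ r⁻¹` the square of the Schatten `p`-norm. -/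
noncomputable def traceRpow (r : ℝ) (T : E →L[ℂ] E) : ℝ≥0∞ :=
  ∑' n, (ENNReal.ofReal (sValue T n) ^ 2) ^ r

theorem IsSingularBasis.traceRpow_eq {ι : Type*} {a : HilbertBasis ι ℂ E}
    (ha : IsSingularBasis a T) {r : ℝ} (hr : 0 < r) :
    traceRpow r T = ∑' i, (‖T (a i)‖ₑ ^ 2) ^ r := by
  simp_rw [traceRpow, ← ofReal_norm, ← ENNReal.rpow_natCast, ← ENNReal.rpow_mul]
  refine tsum_ofReal_rpow_eq_of_encard_eq (sValue_nonneg T) (fun _ => norm_nonneg _)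
    (fun t ht => ?_) (by positivity)
  simp_rw [ha.lt_sValue_iff ht.le]
  exact encard_setOf_coe_lt _

end SingularValues

section Parallelogram

variable {E : Type} [NormedAddCommGroup E] [InnerProductSpace ℂ E] [CompleteSpace E]
  {T B : E →L[ℂ] E} {ι : Type*} {r : ℝ}

theorem tsum_rpow_basis_le_traceRpow (hr : 1 ≤ r) (hT : IsCompactOperator T)
    (c : HilbertBasis ι ℂ E) : ∑' k, (‖T (c k)‖ₑ ^ 2) ^ r ≤ traceRpow r T := by
  obtain ⟨_, a, ha⟩ := exists_isSingularBasis hT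
  exact (ha.tsum_rpow_basis_le c hr).trans_eq (ha.traceRpow_eq (by positivity)).symm

theorem traceRpow_le_tsum_rpow_basis (hr₀ : 0 < r) (hr : r ≤ 1) (hT : IsCompactOperator T)
    (c : HilbertBasis ι ℂ E) : traceRpow r T ≤ ∑' k, (‖T (c k)‖ₑ ^ 2) ^ r := by
  obtain ⟨_, a, ha⟩ := exists_isSingularBasis hT
  exact (ha.traceRpow_eq hr₀).trans_le (ha.le_tsum_rpow_basis c hr₀ hr)

theorem rpow_inv_add_rpow_inv_le (hr : 1 ≤ r) (x y : ℝ≥0∞) :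
    x ^ r⁻¹ + y ^ r⁻¹ ≤ 2 ^ (1 - r⁻¹) * (x + y) ^ r⁻¹ := by
  have hr₀ : 0 < r := one_pos.trans_le hr
  have h := ENNReal.rpow_add_le_mul_rpow_add_rpow (x ^ r⁻¹) (y ^ r⁻¹) hr
  rwa [ENNReal.rpow_inv_rpow hr₀.ne', ENNReal.rpow_inv_rpow hr₀.ne', ← ENNReal.le_rpow_inv_iff hr₀,
    ENNReal.mul_rpow_of_nonneg _ _ (by positivity), ← ENNReal.rpow_mul, sub_mul,
    mul_inv_cancel₀ hr₀.ne', one_mul] at h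

theorem traceRpow_add_traceRpow_sub_le_of_one_le (hr : 1 ≤ r) (hT : IsCompactOperator T)
    (hB : IsCompactOperator B) :
    traceRpow r (T + B) ^ r⁻¹ + traceRpow r (T - B) ^ r⁻¹ ≤
      2 * 2 ^ (1 - r⁻¹) * (traceRpow r T ^ r⁻¹ + traceRpow r B ^ r⁻¹) := by
  have hr₀ : 0 < r := one_pos.trans_le hr
  obtain ⟨_, c, hc⟩ := exists_isSingularBasis (isCompactOperator_columnOp hT hB)
  obtain ⟨_, a, ha⟩ := exists_isSingularBasis (T := T + B) (hT.add hB)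
  obtain ⟨_, b, hb⟩ := exists_isSingularBasis (T := T - B) (hT.sub hB)
  have hsum : traceRpow r (T + B) + traceRpow r (T - B) ≤
      ∑' k, (2 * (‖T (c k)‖ₑ ^ 2 + ‖B (c k)‖ₑ ^ 2)) ^ r := by
    have hc' := hc.of_map_eq_smul (S := (RCLike.ofReal √2 : ℂ) • columnOp T B) fun _ => rfl
    have h := ha.tsum_rpow_add_tsum_rpow_le hb hc' (norm_sqrt_two_smul_columnOp_sq T B) hr
    rw [← ha.traceRpow_eq hr₀, ← hb.traceRpow_eq hr₀] at h
    exact h.trans_eq (by simp_rw [enorm_sqrt_two_smul_columnOp_sq])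
  calc traceRpow r (T + B) ^ r⁻¹ + traceRpow r (T - B) ^ r⁻¹
      ≤ 2 ^ (1 - r⁻¹) * (traceRpow r (T + B) + traceRpow r (T - B)) ^ r⁻¹ :=
        rpow_inv_add_rpow_inv_le hr _ _
    _ ≤ 2 ^ (1 - r⁻¹) * (2 * (∑' k, (‖T (c k)‖ₑ ^ 2 + ‖B (c k)‖ₑ ^ 2) ^ r) ^ r⁻¹) := by
      rw [← rpow_inv_tsum_mul_rpow hr₀]
      gcongr
    _ ≤ 2 ^ (1 - r⁻¹) * (2 * ((∑' k, (‖T (c k)‖ₑ ^ 2) ^ r) ^ r⁻¹ +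
          (∑' k, (‖B (c k)‖ₑ ^ 2) ^ r) ^ r⁻¹)) := by
      gcongr
      exact rpow_inv_tsum_add_rpow_le hr _ _
    _ ≤ 2 ^ (1 - r⁻¹) * (2 * (traceRpow r T ^ r⁻¹ + traceRpow r B ^ r⁻¹)) := by
      gcongr <;> exact tsum_rpow_basis_le_traceRpow hr ‹_› c
    _ = 2 * 2 ^ (1 - r⁻¹) * (traceRpow r T ^ r⁻¹ + traceRpow r B ^ r⁻¹) := by ring

theorem traceRpow_add_traceRpow_sub_le_of_le_one (hr₀ : 0 < r) (hr : r ≤ 1)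
    (hT : IsCompactOperator T) (hB : IsCompactOperator B) :
    traceRpow r (T + B) ^ r⁻¹ + traceRpow r (T - B) ^ r⁻¹ ≤
      2 * 2 ^ (r⁻¹ - 1) * (traceRpow r T ^ r⁻¹ + traceRpow r B ^ r⁻¹) := by
  obtain ⟨_, c, hc⟩ := exists_isSingularBasis (isCompactOperator_columnOp hT hB)
  obtain ⟨_, a, ha⟩ := exists_isSingularBasis hT
  obtain ⟨_, b, hb⟩ := exists_isSingularBasis hB
  have hsum : ∑' k, (‖columnOp T B (c k)‖ₑ ^ 2) ^ r ≤ traceRpow r T + traceRpow r B := by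
    rw [ha.traceRpow_eq hr₀, hb.traceRpow_eq hr₀]
    exact ha.tsum_rpow_le_tsum_rpow_add hb hc (norm_columnOp_sq T B) hr₀ hr
  calc traceRpow r (T + B) ^ r⁻¹ + traceRpow r (T - B) ^ r⁻¹
      ≤ (∑' k, (‖(T + B) (c k)‖ₑ ^ 2) ^ r) ^ r⁻¹ + (∑' k, (‖(T - B) (c k)‖ₑ ^ 2) ^ r) ^ r⁻¹ := by
        gcongr
        · exact traceRpow_le_tsum_rpow_basis hr₀ hr (hT.add hB) c
        · exact traceRpow_le_tsum_rpow_basis hr₀ hr (hT.sub hB) c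
    _ ≤ (∑' k, (‖(T + B) (c k)‖ₑ ^ 2 + ‖(T - B) (c k)‖ₑ ^ 2) ^ r) ^ r⁻¹ :=
      le_rpow_inv_tsum_add_rpow hr₀ hr _ _
    _ = 2 * (∑' k, (‖columnOp T B (c k)‖ₑ ^ 2) ^ r) ^ r⁻¹ := by
      rw [← rpow_inv_tsum_mul_rpow hr₀]
      simp_rw [enorm_columnOp_sq, ← enorm_sqrt_two_smul_columnOp_sq,
        enorm_sq_eq_add_of_norm_sq_eq_add (norm_sqrt_two_smul_columnOp_sq T B)]
    _ ≤ 2 * (traceRpow r T + traceRpow r B) ^ r⁻¹ := by gcongr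
    _ ≤ 2 * (2 ^ (r⁻¹ - 1) * (traceRpow r T ^ r⁻¹ + traceRpow r B ^ r⁻¹)) := by
      gcongr
      exact ENNReal.rpow_add_le_mul_rpow_add_rpow _ _ ((one_le_inv₀ hr₀).2 hr)
    _ = 2 * 2 ^ (r⁻¹ - 1) * (traceRpow r T ^ r⁻¹ + traceRpow r B ^ r⁻¹) := (mul_assoc _ _ _).symm

theorem traceRpow_add_traceRpow_sub_le (hr : 0 < r) (hT : IsCompactOperator T)
    (hB : IsCompactOperator B) :
    traceRpow r (T + B) ^ r⁻¹ + traceRpow r (T - B) ^ r⁻¹ ≤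
      2 * max (2 ^ (r⁻¹ - 1)) (2 ^ (1 - r⁻¹)) * (traceRpow r T ^ r⁻¹ + traceRpow r B ^ r⁻¹) := by
  rcases le_total 1 r with h | h
  · grw [traceRpow_add_traceRpow_sub_le_of_one_le h hT hB, ← le_max_right]
  · grw [traceRpow_add_traceRpow_sub_le_of_le_one hr h hT hB, ← le_max_left]

end Parallelogram

section SchattenNorm

variable {E : Type} [NormedAddCommGroup E] [InnerProductSpace ℂ E] {S : E →L[ℂ] E} {p : ℝ}

theorem traceRpow_half_eq (hp : 0 ≤ p) (S : E →L[ℂ] E) :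
    traceRpow (p / 2) S = ∑' n, ENNReal.ofReal (sValue S n ^ p) := by
  refine tsum_congr fun n => ?_
  rw [← ENNReal.ofReal_rpow_of_nonneg (sValue_nonneg S n) hp, ← ENNReal.rpow_natCast,
    ← ENNReal.rpow_mul, Nat.cast_ofNat, mul_div_cancel₀ p two_ne_zero]

theorem memSp_iff_traceRpow_ne_top (hp : 0 ≤ p) :
    MemSp p S ↔ IsCompactOperator S ∧ traceRpow (p / 2) S ≠ ⊤ := by
  have hnonneg (n : ℕ) : 0 ≤ sValue S n ^ p := Real.rpow_nonneg (sValue_nonneg S n) p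
  rw [traceRpow_half_eq hp]
  refine and_congr_right fun _ => ⟨fun h => h.tsum_ofReal_ne_top, fun h => ?_⟩
  simpa only [ENNReal.toReal_ofReal (hnonneg _)] using ENNReal.summable_toReal h

theorem schattenNorm_eq_toReal_traceRpow (hp : 0 ≤ p) (S : E →L[ℂ] E) :
    schattenNorm p S = (traceRpow (p / 2) S).toReal ^ (1 / p) := by
  have hnonneg (n : ℕ) : 0 ≤ sValue S n ^ p := Real.rpow_nonneg (sValue_nonneg S n) p
  rw [traceRpow_half_eq hp, ENNReal.tsum_toReal_eq fun _ => ENNReal.ofReal_ne_top]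
  simp_rw [ENNReal.toReal_ofReal (hnonneg _)]
  rfl

theorem MemSp.ofReal_schattenNorm_sq (hp : 0 < p) (hS : MemSp p S) :
    ENNReal.ofReal (schattenNorm p S ^ 2) = traceRpow (p / 2) S ^ (p / 2)⁻¹ := by
  have htop := ((memSp_iff_traceRpow_ne_top hp.le).1 hS).2
  have hexp : 1 / p * (2 : ℕ) = (p / 2)⁻¹ := by
    rw [inv_div, Nat.cast_ofNat, one_div_mul_eq_div]
  rw [schattenNorm_eq_toReal_traceRpow hp.le, ← Real.rpow_mul_natCast ENNReal.toReal_nonneg, hexp,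
    ← ENNReal.ofReal_rpow_of_nonneg ENNReal.toReal_nonneg (by positivity),
    ENNReal.ofReal_toReal htop]

theorem MemSp.schattenNorm_pos (hS : MemSp p S) (hS₀ : S ≠ 0) : 0 < schattenNorm p S := by
  refine Real.rpow_pos_of_pos (hS.2.tsum_pos
    (fun n => Real.rpow_nonneg (sValue_nonneg S n) p) 0 ?_) _
  rw [sValue_zero_eq_norm]
  exact Real.rpow_pos_of_pos (norm_pos_iff.2 hS₀) _

theorem schattenNorm_smul (hp : 0 < p) (z : ℂ) (S : E →L[ℂ] E) :
    schattenNorm p (z • S) = ‖z‖ * schattenNorm p S := by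
  simp_rw [schattenNorm, sValue_smul, Real.mul_rpow (norm_nonneg z) (sValue_nonneg S _),
    tsum_mul_left]
  rw [Real.mul_rpow (by positivity)
      (tsum_nonneg fun n => Real.rpow_nonneg (sValue_nonneg S n) p), one_div,
    Real.rpow_rpow_inv (norm_nonneg z) hp.ne']

theorem schattenNorm_zero (hp : 0 < p) : schattenNorm p (0 : E →L[ℂ] E) = 0 := by
  simpa using schattenNorm_smul hp 0 (0 : E →L[ℂ] E)

end SchattenNorm

section VonNeumannJordan

variable {E : Type} [NormedAddCommGroup E] [InnerProductSpace ℂ E] [CompleteSpace E]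
  {T B : E →L[ℂ] E} {p : ℝ}

theorem MemSp.add_and_sub (hp : 0 < p) (hT : MemSp p T) (hB : MemSp p B) :
    MemSp p (T + B) ∧ MemSp p (T - B) := by
  simp only [memSp_iff_traceRpow_ne_top hp.le] at *
  have hr : 0 < (p / 2)⁻¹ := by positivity
  have hrhs : 2 * max (2 ^ ((p / 2)⁻¹ - 1)) (2 ^ (1 - (p / 2)⁻¹)) *
      (traceRpow (p / 2) T ^ (p / 2)⁻¹ + traceRpow (p / 2) B ^ (p / 2)⁻¹) ≠ ⊤ := by
    finiteness [hT.2, hB.2]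
  have hlhs := ne_top_of_le_ne_top hrhs
    (traceRpow_add_traceRpow_sub_le (by positivity) hT.1 hB.1)
  simp only [ENNReal.add_ne_top, ne_eq, ENNReal.rpow_eq_top_iff_of_pos hr] at hlhs
  exact ⟨⟨hT.1.add hB.1, hlhs.1⟩, ⟨hT.1.sub hB.1, hlhs.2⟩⟩

theorem MemSp.schattenNorm_add_sq_add_sub_sq_le (hp : 0 < p) (hT : MemSp p T) (hB : MemSp p B) :
    schattenNorm p (T + B) ^ 2 + schattenNorm p (T - B) ^ 2 ≤
      2 * max ((2 : ℝ) ^ (2 / p - 1)) ((2 : ℝ) ^ (1 - 2 / p)) *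
        (schattenNorm p T ^ 2 + schattenNorm p B ^ 2) := by
  have h := traceRpow_add_traceRpow_sub_le (r := p / 2) (by positivity) hT.1 hB.1
  obtain ⟨hadd, hsub⟩ := hT.add_and_sub hp hB
  rw [← hadd.ofReal_schattenNorm_sq hp, ← hsub.ofReal_schattenNorm_sq hp,
    ← hT.ofReal_schattenNorm_sq hp, ← hB.ofReal_schattenNorm_sq hp, inv_div] at h
  rw [← ENNReal.ofReal_le_ofReal_iff (by positivity), ENNReal.ofReal_mul (by positivity),
    ENNReal.ofReal_mul zero_le_two, ENNReal.ofReal_max, ENNReal.ofReal_add (by positivity)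
      (by positivity), ENNReal.ofReal_add (by positivity) (by positivity)]
  simpa only [← ENNReal.ofReal_rpow_of_pos two_pos, ENNReal.ofReal_ofNat] using h

theorem MemSp.le_schattenNorm_add_sq_add_sub_sq (hp : 0 < p) (hT : MemSp p T) (hB : MemSp p B) :
    2 * (schattenNorm p T ^ 2 + schattenNorm p B ^ 2) ≤
      max ((2 : ℝ) ^ (2 / p - 1)) ((2 : ℝ) ^ (1 - 2 / p)) *
        (schattenNorm p (T + B) ^ 2 + schattenNorm p (T - B) ^ 2) := by
  obtain ⟨hadd, hsub⟩ := hT.add_and_sub hp hB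
  have h := hadd.schattenNorm_add_sq_add_sub_sq_le hp hsub
  have hT₂ : T + B + (T - B) = (2 : ℂ) • T := by rw [two_smul]; abel
  have hB₂ : T + B - (T - B) = (2 : ℂ) • B := by rw [two_smul]; abel
  rw [hT₂, hB₂, schattenNorm_smul hp, schattenNorm_smul hp, Complex.norm_ofNat] at h
  linarith

theorem MemSp.schattenNorm_sq_ratio_mem_Icc (hp : 0 < p) (hT : MemSp p T) (hB : MemSp p B)
    (hTB : ¬(T = 0 ∧ B = 0)) :
    (schattenNorm p (T + B) ^ 2 + schattenNorm p (T - B) ^ 2) /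
        (2 * (schattenNorm p T ^ 2 + schattenNorm p B ^ 2)) ∈
      Set.Icc (1 / max ((2 : ℝ) ^ (2 / p - 1)) ((2 : ℝ) ^ (1 - 2 / p)))
        (max ((2 : ℝ) ^ (2 / p - 1)) ((2 : ℝ) ^ (1 - 2 / p))) := by
  have hpos : 0 < 2 * (schattenNorm p T ^ 2 + schattenNorm p B ^ 2) := by
    rcases not_and_or.1 hTB with h | h
    · have := hT.schattenNorm_pos h
      positivity
    · have := hB.schattenNorm_pos h
      positivity
  rw [Set.mem_Icc, div_le_div_iff₀ (by positivity) hpos, div_le_iff₀ hpos]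
  constructor
  · linarith [hT.le_schattenNorm_add_sq_add_sub_sq hp hB]
  · linarith [hT.schattenNorm_add_sq_add_sub_sq_le hp hB]

end VonNeumannJordan

section DiagonalSchattenNorm

variable {E : Type} [NormedAddCommGroup E] [InnerProductSpace ℂ E] {ι : Type*} {p : ℝ}

theorem traceRpow_diagonalOp {r : ℝ} (hr : 0 < r) (e : HilbertBasis ι ℂ E) (d : ι →₀ ℂ) :
    traceRpow r (diagonalOp e d) = d.sum fun _ z => (‖z‖ₑ ^ 2) ^ r := by
  have henorm (k : ι) : ‖diagonalOp e d (e k)‖ₑ = ‖d k‖ₑ := by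
    rw [diagonalOp_apply_basis, enorm_smul, ← ofReal_norm (e k), e.orthonormal.1,
      ENNReal.ofReal_one, mul_one]
  simp_rw [(isSingularBasis_diagonalOp e d).traceRpow_eq hr, henorm]
  exact tsum_eq_sum fun k hk => by simp [Finsupp.notMem_support_iff.1 hk, hr]

theorem memSp_diagonalOp (hp : 0 < p) (e : HilbertBasis ι ℂ E) (d : ι →₀ ℂ) :
    MemSp p (diagonalOp e d) := by
  rw [memSp_iff_traceRpow_ne_top hp.le, traceRpow_diagonalOp (by positivity)]
  exact ⟨isCompactOperator_diagonalOp e d, ENNReal.sum_ne_top.2 fun k _ => by finiteness⟩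

theorem schattenNorm_diagonalOp (hp : 0 < p) (e : HilbertBasis ι ℂ E) (d : ι →₀ ℂ) :
    schattenNorm p (diagonalOp e d) = (d.sum fun _ z => ‖z‖ ^ p) ^ (1 / p) := by
  rw [schattenNorm_eq_toReal_traceRpow hp.le, traceRpow_diagonalOp (by positivity), Finsupp.sum,
    ENNReal.toReal_sum fun k _ => by finiteness]
  congr 1
  refine Finset.sum_congr rfl fun k _ => ?_
  rw [← ENNReal.toReal_rpow, ENNReal.toReal_pow, toReal_enorm, ← Real.rpow_natCast_mul,
    Nat.cast_ofNat, mul_div_cancel₀ p two_ne_zero]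
  exact norm_nonneg _

theorem schattenNorm_diagonalOp_single (hp : 0 < p) (e : HilbertBasis ι ℂ E) (i : ι) (z : ℂ) :
    schattenNorm p (diagonalOp e (.single i z)) = ‖z‖ := by
  rw [schattenNorm_diagonalOp hp, Finsupp.sum_single_index (by simp [hp.ne']), one_div,
    Real.rpow_rpow_inv (norm_nonneg z) hp.ne']

theorem schattenNorm_diagonalOp_single_add_single (hp : 0 < p) (e : HilbertBasis ι ℂ E) {i j : ι}
    (hij : i ≠ j) (z w : ℂ) :
    schattenNorm p (diagonalOp e (.single i z) + diagonalOp e (.single j w)) =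
      (‖z‖ ^ p + ‖w‖ ^ p) ^ (1 / p) := by
  classical
  have hzero : ‖(0 : ℂ)‖ ^ p = 0 := by simp [hp.ne']
  rw [← map_add, schattenNorm_diagonalOp hp, Finsupp.sum_add_index_of_disjoint,
    Finsupp.sum_single_index hzero, Finsupp.sum_single_index hzero]
  exact Finset.disjoint_of_subset_left Finsupp.support_single_subset (by simp [hij])

end DiagonalSchattenNorm

theorem exists_schattenNorm_add_sub_eq {H : Type} [NormedAddCommGroup H] [InnerProductSpace ℂ H]
    {ι : Type*} [Nontrivial ι] (e : HilbertBasis ι ℂ H) {p : ℝ} (hp : 0 < p) :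
    ∃ T B : H →L[ℂ] H, MemSp p T ∧ MemSp p B ∧ schattenNorm p T = 1 ∧ schattenNorm p B = 1 ∧
      schattenNorm p (T + B) = 2 ^ (1 / p) ∧ schattenNorm p (T - B) = 2 ^ (1 / p) := by
  obtain ⟨i, j, hij⟩ := exists_pair_ne ι
  refine ⟨diagonalOp e (.single i 1), diagonalOp e (.single j 1), memSp_diagonalOp hp e _,
    memSp_diagonalOp hp e _, ?_, ?_, ?_, ?_⟩
  · rw [schattenNorm_diagonalOp_single hp, norm_one]
  · rw [schattenNorm_diagonalOp_single hp, norm_one]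
  · rw [schattenNorm_diagonalOp_single_add_single hp e hij]
    norm_num
  · rw [sub_eq_add_neg, ← map_neg, ← Finsupp.single_neg,
      schattenNorm_diagonalOp_single_add_single hp e hij]
    norm_num

theorem stmt17_general {H : Type} [NormedAddCommGroup H] [InnerProductSpace ℂ H] [CompleteSpace H]
    {ι : Type*} [Nontrivial ι] (e : HilbertBasis ι ℂ H) {p : ℝ} (hp : 0 < p) :
    cNJSchatten (H := H) p = max ((2 : ℝ) ^ (2 / p - 1)) ((2 : ℝ) ^ (1 - 2 / p)) := by
  refine IsLeast.csInf_eq ⟨⟨by positivity, fun T B hT hB hTB =>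
    hT.schattenNorm_sq_ratio_mem_Icc hp hB hTB⟩, ?_⟩
  rintro c ⟨hc₀, hc⟩
  obtain ⟨T, B, hT, hB, hT₁, hB₁, hadd, hsub⟩ := exists_schattenNorm_add_sub_eq e hp
  have hTB : ¬(T = 0 ∧ B = 0) := fun h => by
    simp [h.1, schattenNorm_zero hp] at hT₁
  have hsq : ((2 : ℝ) ^ (1 / p)) ^ 2 = 2 ^ (2 / p - 1) * 2 := by
    rw [← Real.rpow_mul_natCast zero_le_two, ← Real.rpow_add_one two_ne_zero]
    ring_nf
  have hval : (((2 : ℝ) ^ (1 / p)) ^ 2 + (2 ^ (1 / p)) ^ 2) / (2 * (1 ^ 2 + 1 ^ 2)) =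
      2 ^ (2 / p - 1) := by
    rw [hsq]
    ring
  have hratio := hc T B hT hB hTB
  rw [hadd, hsub, hT₁, hB₁, hval] at hratio
  refine max_le hratio.2 ?_
  rw [← neg_sub, Real.rpow_neg zero_le_two]
  exact inv_le_of_inv_le₀ hc₀ (one_div c ▸ hratio.1)

/-- for `1 < p < ∞`, the von Neumann–Jordan constant of the Schatten class
`S_p(H)` equals `max {2^(2/p − 1), 2^(1 − 2/p)}`.  (Here `H` is an infinite-dimensional
separable complex Hilbert space, witnessed by the Hilbert basis `e` indexed by `ℕ`.) -/
theorem stmt17 {H : Type} [NormedAddCommGroup H] [InnerProductSpace ℂ H]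
    [CompleteSpace H] [TopologicalSpace.SeparableSpace H]
    (e : HilbertBasis ℕ ℂ H)
    (p : ℝ) (hp : 1 < p) :
    cNJSchatten (H := H) p = max ((2 : ℝ) ^ (2 / p - 1)) ((2 : ℝ) ^ (1 - 2 / p)) :=
  stmt17_general e (one_pos.trans hp)
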